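/- arXiv:2102.02987 — 2 statements merged into one kernel-verified Lean document; each statement's English description precedes it below -/
import Mathlib

section
/- Let N_b ≥ 1 and N_t ≥ 2 be integers and let S be the UF-3BL array with parameters N_b, N_t. Then its weight function satisfies w_S(1) = 1, w_S(2) = 1, and w_S(3) = 3N_b − 1. -/
/-!
Put `M = Nt * (3 * Nb + 5)`. The six sub-arrays lie on the line from left to right, and the gap
between consecutive ones is: `4` (first to second), `3 * Nb + 2` (second to third), `3` (third to
fourth), `4` (fourth to fifth), `3` (fifth to sixth). Inside the sub-arrays the spacings are
`3, 1, 3 * Nb + 5, 3, 2, 3`. Hence difference `1` occurs only inside the second sub-array,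
difference `2` only inside the fifth, and the lower sensors of the pairs with difference `3` form
three uniform arrays: the first sub-array without its last sensor, the `Nb` sensors starting at
the last sensor `M + 3 * Nb - 1` of the transfer layer, and the `Nb` sensors starting at
`M + 6 * Nb + 5`, the last sensor of the fifth sub-array. This gives `(Nb - 1) + Nb + Nb` pairs.

`weight_eq_card` reduces the weight to counting lower sensors; `mem_UF3BL_iff` makes membership
linear in `M`, and `transfer_bounds`, `transfer_gap`, `transfer_last` describe the transfer
layer, so that the remaining case analysis is linear integer arithmetic.
-/

/-- Weight function: number of sensor pairs with difference `n`. -/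
def weight (S : Finset ℤ) (n : ℤ) : ℕ :=
  ((S ×ˢ S).filter fun p => p.1 - p.2 = n).card

/-- The uniform linear array with initial position `I`, interspace `s` and `N` sensors. -/
def ULA (I s : ℤ) (N : ℕ) : Finset ℤ :=
  (Finset.range N).image fun k : ℕ => I + (k : ℤ) * s

/-- The UF-3BL sparse array with parameters `Nb` (base-layer sub-ULA size) and
`Nt` (transfer-layer size). -/
def UF3BL (Nb Nt : ℕ) : Finset ℤ :=
  ULA 0 3 Nb ∪
  ULA (3 * (Nb : ℤ) + 1) 1 2 ∪
  ULA (6 * (Nb : ℤ) + 4) (3 * (Nb : ℤ) + 5) Nt ∪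
  ULA (3 * (Nb : ℤ) * Nt + 5 * Nt + 3 * Nb + 2) 3 Nb ∪
  ULA (3 * (Nb : ℤ) * Nt + 5 * Nt + 6 * Nb + 3) 2 2 ∪
  ULA (3 * (Nb : ℤ) * Nt + 5 * Nt + 6 * Nb + 8) 3 Nb

/-- The weight at `n` counts the lower sensors `x` of the pairs `(x + n, x)`. -/
lemma weight_eq_card (S T : Finset ℤ) (n : ℤ) (h : ∀ x, x ∈ T ↔ x ∈ S ∧ x + n ∈ S) :
    weight S n = T.card := by
  unfold weight
  refine Finset.card_nbij' (fun p => p.2) (fun x => (x + n, x)) ?_ ?_ ?_ ?_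
  · rintro ⟨a, b⟩ hp
    simp only [Finset.coe_filter, Finset.mem_product, Set.mem_ofPred_eq] at hp
    obtain ⟨⟨ha, hb⟩, hab⟩ := hp
    obtain rfl : a = b + n := by omega
    exact (h b).2 ⟨hb, ha⟩
  · intro x hx
    have hx' := (h x).1 hx
    simp [hx'.1, hx'.2]
  · rintro ⟨a, b⟩ hp
    simp only [Finset.coe_filter, Finset.mem_product, Set.mem_ofPred_eq] at hp
    ext
    · show b + n = a
      omega
    · rfl
  · intro x _
    rfl

lemma mem_ULA (I s : ℤ) (N : ℕ) (x : ℤ) :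
    x ∈ ULA I s N ↔ ∃ k : ℕ, k < N ∧ x = I + k * s := by
  simp [ULA, eq_comm]

lemma card_ULA (I s : ℤ) (N : ℕ) (hs : s ≠ 0) : (ULA I s N).card = N := by
  unfold ULA
  rw [Finset.card_image_of_injective, Finset.card_range]
  intro a b hab
  simpa [hs] using hab

/-- A transfer-layer sensor is either the last one, `M + 3 * Nb - 1`, or at least one full
spacing below it. -/
lemma transfer_bounds (Nb Nt : ℕ) (M x : ℤ) (hM : M = 3 * (Nb : ℤ) * Nt + 5 * Nt)
    (h : x ∈ ULA (6 * (Nb : ℤ) + 4) (3 * (Nb : ℤ) + 5) Nt) :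
    6 * (Nb : ℤ) + 4 ≤ x ∧ (x = M + 3 * Nb - 1 ∨ x ≤ M - 6) := by
  obtain ⟨k, hk, rfl⟩ := (mem_ULA _ _ _ _).1 h
  refine ⟨le_add_of_nonneg_right (by positivity), ?_⟩
  obtain ⟨d, rfl⟩ := Nat.exists_eq_add_of_lt hk
  rcases Nat.eq_zero_or_pos d with rfl | hd
  · left
    subst hM
    push_cast
    ring
  · right
    subst hM
    have h1 : (1 : ℤ) ≤ d := by exact_mod_cast hd
    push_cast
    nlinarith [mul_le_mul_of_nonneg_right h1 (by positivity : (0 : ℤ) ≤ 3 * (Nb : ℤ) + 5)]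

lemma transfer_gap (Nb Nt : ℕ) (x y : ℤ) (hxy : x < y)
    (hx : x ∈ ULA (6 * (Nb : ℤ) + 4) (3 * (Nb : ℤ) + 5) Nt)
    (hy : y ∈ ULA (6 * (Nb : ℤ) + 4) (3 * (Nb : ℤ) + 5) Nt) :
    x + 5 ≤ y := by
  obtain ⟨k, hk, rfl⟩ := (mem_ULA _ _ _ _).1 hx
  obtain ⟨l, hl, rfl⟩ := (mem_ULA _ _ _ _).1 hy
  have h0 : (0 : ℤ) < 3 * (Nb : ℤ) + 5 := by positivity
  have hkl : (k : ℤ) < l := lt_of_mul_lt_mul_right (by linarith) h0.le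
  have h1 : (k : ℤ) + 1 ≤ l := hkl
  nlinarith [mul_le_mul_of_nonneg_right h1 h0.le]

/-- Membership in the array, with `M` in place of the nonlinear offset `Nt * (3 * Nb + 5)`. The
transfer layer is left folded, being the only part that is not linear in the parameters. -/
lemma mem_UF3BL_iff (Nb Nt : ℕ) (M x : ℤ) (hM : M = 3 * (Nb : ℤ) * Nt + 5 * Nt) :
    x ∈ UF3BL Nb Nt ↔
      (∃ k : ℕ, k < Nb ∧ x = 3 * k) ∨ (x = 3 * Nb + 1 ∨ x = 3 * Nb + 2) ∨
      x ∈ ULA (6 * (Nb : ℤ) + 4) (3 * (Nb : ℤ) + 5) Nt ∨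
      (∃ k : ℕ, k < Nb ∧ x = M + 3 * Nb + 2 + 3 * k) ∨
      (x = M + 6 * Nb + 3 ∨ x = M + 6 * Nb + 5) ∨
      (∃ k : ℕ, k < Nb ∧ x = M + 6 * Nb + 8 + 3 * k) := by
  have two (I s : ℤ) : x ∈ ULA I s 2 ↔ x = I ∨ x = I + s := by
    simp [ULA, Finset.range_add_one]
    tauto
  unfold UF3BL
  rw [← hM]
  simp only [Finset.mem_union, two, or_assoc]
  simp only [mem_ULA _ 3, mul_comm _ (3 : ℤ), zero_add, add_assoc]
  norm_num

/-- The last transfer-layer sensor, which is `3` below the fourth sub-array. -/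
lemma transfer_last (Nb Nt : ℕ) (ht : 1 ≤ Nt) (M : ℤ) (hM : M = 3 * (Nb : ℤ) * Nt + 5 * Nt) :
    M + 3 * Nb - 1 ∈ ULA (6 * (Nb : ℤ) + 4) (3 * (Nb : ℤ) + 5) Nt := by
  refine (mem_ULA _ _ _ _).2 ⟨Nt - 1, by omega, ?_⟩
  subst hM
  push_cast [Nat.cast_sub ht]
  ring

/-- The weight function of the UF-3BL array satisfies
`w(1) = 1`, `w(2) = 1`, `w(3) = 3·Nb - 1`. -/
theorem uf3bl_weights (Nb Nt : ℕ) (hb : 1 ≤ Nb) (ht : 2 ≤ Nt) :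
    weight (UF3BL Nb Nt) 1 = 1 ∧
    weight (UF3BL Nb Nt) 2 = 1 ∧
    weight (UF3BL Nb Nt) 3 = 3 * Nb - 1 := by
  obtain ⟨M, hM⟩ : ∃ M : ℤ, M = 3 * (Nb : ℤ) * Nt + 5 * Nt := ⟨_, rfl⟩
  have hmem := fun x => mem_UF3BL_iff Nb Nt M x hM
  have hbd := fun x => transfer_bounds Nb Nt M x hM
  have hgap := transfer_gap Nb Nt
  have hlast := transfer_last Nb Nt (by omega) M hM
  -- The transfer layer is nonempty, so the first and last sub-arrays are well separated.
  have hMbig : 3 * (Nb : ℤ) + 5 ≤ M := by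
    have := (hbd _ hlast).1
    omega
  generalize ULA (6 * (Nb : ℤ) + 4) (3 * (Nb : ℤ) + 5) Nt = C at hmem hbd hgap hlast
  refine ⟨?_, ?_, ?_⟩
  · rw [weight_eq_card _ {3 * (Nb : ℤ) + 1} 1, Finset.card_singleton]
    intro x
    rw [Finset.mem_singleton, hmem, hmem]
    constructor
    · rintro rfl
      omega
    · rintro ⟨h1, h2⟩
      rcases h1 with ⟨k, hk, h1⟩ | h1 | h1 | ⟨k, hk, h1⟩ | h1 | ⟨k, hk, h1⟩ <;>
      rcases h2 with ⟨l, hl, h2⟩ | h2 | h2 | ⟨l, hl, h2⟩ | h2 | ⟨l, hl, h2⟩ <;>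
      first
      | omega
      | (have := hgap _ _ (by omega) h1 h2; omega)
      | (have := hbd _ h1; omega)
      | (have := hbd _ h2; omega)
  · rw [weight_eq_card _ {M + 6 * (Nb : ℤ) + 3} 2, Finset.card_singleton]
    intro x
    rw [Finset.mem_singleton, hmem, hmem]
    constructor
    · rintro rfl
      omega
    · rintro ⟨h1, h2⟩
      rcases h1 with ⟨k, hk, h1⟩ | h1 | h1 | ⟨k, hk, h1⟩ | h1 | ⟨k, hk, h1⟩ <;>
      rcases h2 with ⟨l, hl, h2⟩ | h2 | h2 | ⟨l, hl, h2⟩ | h2 | ⟨l, hl, h2⟩ <;>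
      first
      | omega
      | (have := hgap _ _ (by omega) h1 h2; omega)
      | (have := hbd _ h1; omega)
      | (have := hbd _ h2; omega)
  · rw [weight_eq_card _
      (ULA 0 3 (Nb - 1) ∪ ULA (M + 3 * Nb - 1) 3 Nb ∪ ULA (M + 6 * Nb + 5) 3 Nb) 3]
    · rw [Finset.card_union_of_disjoint, Finset.card_union_of_disjoint]
      · simp only [card_ULA _ 3 _ three_ne_zero]
        omega
      · rw [Finset.disjoint_left]
        intro x h1 h2
        rw [mem_ULA] at h1 h2
        omega
      · rw [Finset.disjoint_left]
        intro x h1 h2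
        rw [Finset.mem_union, mem_ULA, mem_ULA] at h1
        rw [mem_ULA] at h2
        omega
    intro x
    rw [hmem, hmem]
    simp only [Finset.mem_union, mem_ULA]
    constructor
    · rintro ((⟨k, hk, rfl⟩ | ⟨k, hk, rfl⟩) | ⟨k, hk, rfl⟩)
      · exact ⟨.inl ⟨k, by omega, by ring⟩, .inl ⟨k + 1, by omega, by push_cast; ring⟩⟩
      · refine ⟨?_, .inr (.inr (.inr (.inl ⟨k, hk, by ring⟩)))⟩
        rcases k with _ | k
        · exact .inr (.inr (.inl (by simpa using hlast)))
        · exact .inr (.inr (.inr (.inl ⟨k, by omega, by push_cast; ring⟩)))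
      · refine ⟨?_, .inr (.inr (.inr (.inr (.inr ⟨k, hk, by ring⟩))))⟩
        rcases k with _ | k
        · exact .inr (.inr (.inr (.inr (.inl (.inr (by simp))))))
        · exact .inr (.inr (.inr (.inr (.inr ⟨k, by omega, by push_cast; ring⟩))))
    · rintro ⟨h1, h2⟩
      -- The index of the lower sensor is `k` in the first sub-array; in the other two uniform
      -- arrays it equals the index `l` of the upper sensor in the fourth or sixth sub-array.
      rcases h1 with ⟨k, hk, h1⟩ | h1 | h1 | ⟨k, hk, h1⟩ | h1 | ⟨k, hk, h1⟩ <;>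
      rcases h2 with ⟨l, hl, h2⟩ | h2 | h2 | ⟨l, hl, h2⟩ | h2 | ⟨l, hl, h2⟩ <;>
      first
      | (exfalso; omega)
      | (exfalso; have := hgap _ _ (by omega) h1 h2; omega)
      | (exfalso; have := hbd _ h1; omega)
      | (exfalso; have := hbd _ h2; omega)
      | exact .inl (.inl ⟨k, by omega, by omega⟩)
      | exact .inl (.inr ⟨l, hl, by omega⟩)
      | exact .inr ⟨l, hl, by omega⟩
end

section
/- Let N_b ≥ 3 and N_t ≥ 2 be integers and let S be the UF-4BL array with parameters N_b, N_t. Then the difference coarray D(S) contains every integer d with |d| ≤ J, where J = 4N_bN_t + 7N_t + 4N_b + 12; i.e., the central consecutive segment of the coarray has at least 2J + 1 elements. -/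
/-!
Put `P = 4 Nb + 7` and `L = (Nt + 1) P`, so that `J = L + 5`. In these terms the array consists of

* a left part `0, 3`, `7 + 4i`, `P + 1, P + 2`, `P + 8 + 4i`,
* the transfer layer `5 + m P` with `2 ≤ m ≤ Nt + 1`,
* a right part `L + 12 + 4i`, `L + P + 4, L + P + 6`, `L + P + 11 + 4i`,

where always `0 ≤ i < Nb`. The coarray is symmetric, so let `0 ≤ d = q P + r` with `0 ≤ r < P`.
The differences (transfer - left) realise the residues `r = 2, 3, 4, 5`, `8 + 4i`, `9 + 4i`, and the
differences (right - transfer) the residues `r = 1`, `6 + 4i`, `7 + 4i`, `P - 1`; together with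
`r = 0` (transfer - transfer) these are all residues modulo `P`. For each residue this works for all
`q` but a few at the two ends of the range `0 ≤ q ≤ Nt + 1`. The exceptions with `q ≤ 1` are
differences inside the left part or inside the right part, and those with `q ≥ Nt` are
differences (right - left).
-/

/-- Difference coarray of a finite set of sensor positions. -/
def dca (S : Finset ℤ) : Finset ℤ := (S ×ˢ S).image fun p => p.1 - p.2

/-- The UF-4BL sparse array with parameters `Nb` (base-layer sub-ULA size) and
`Nt` (transfer-layer size). -/
def UF4BL (Nb Nt : ℕ) : Finset ℤ :=
  ULA 0 3 2 ∪
  ULA 7 4 Nb ∪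
  ULA (4 * (Nb : ℤ) + 8) 1 2 ∪
  ULA (4 * (Nb : ℤ) + 15) 4 Nb ∪
  ULA (8 * (Nb : ℤ) + 19) (4 * (Nb : ℤ) + 7) Nt ∪
  ULA (4 * (Nb : ℤ) * Nt + 7 * Nt + 4 * Nb + 19) 4 Nb ∪
  ULA (4 * (Nb : ℤ) * Nt + 7 * Nt + 8 * Nb + 18) 2 2 ∪
  ULA (4 * (Nb : ℤ) * Nt + 7 * Nt + 8 * Nb + 25) 4 Nb

theorem sub_mem_dca {S : Finset ℤ} {x y d : ℤ} (hx : x ∈ S) (hy : y ∈ S) (h : d = x - y) :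
    d ∈ dca S := by
  subst h
  exact Finset.mem_image.2 ⟨(x, y), Finset.mem_product.2 ⟨hx, hy⟩, rfl⟩

theorem neg_mem_dca {S : Finset ℤ} {d : ℤ} (h : -d ∈ dca S) : d ∈ dca S := by
  obtain ⟨⟨x, y⟩, hxy, e⟩ := Finset.mem_image.1 h
  obtain ⟨hx, hy⟩ := Finset.mem_product.1 hxy
  exact sub_mem_dca hy hx (by simp only at e; linarith)

theorem mem_ULA_s15 {I s : ℤ} {N : ℕ} {x : ℤ} (i : ℤ) (h0 : 0 ≤ i) (h1 : i < N)
    (hx : x = I + i * s) : x ∈ ULA I s N := by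
  lift i to ℕ using h0
  exact Finset.mem_image.2 ⟨i, Finset.mem_range.2 (by exact_mod_cast h1), hx.symm⟩

/-- The nonnegative half of the central segment, for any set `S` containing the sensors of the
UF-4BL array, described through the period `P = 4 n + 7` and the offset `L = (t + 1) P`. -/
theorem central_segment_of_mem {S : Finset ℤ} {n t P L : ℤ} (hn : 3 ≤ n) (ht : 2 ≤ t)
    (hP : P = 4 * n + 7) (hL : L = (t + 1) * P)
    (a0 : 0 ∈ S) (a1 : 3 ∈ S)
    (b : ∀ i, 0 ≤ i → i < n → 7 + 4 * i ∈ S)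
    (c0 : P + 1 ∈ S) (c1 : P + 2 ∈ S)
    (e : ∀ i, 0 ≤ i → i < n → P + 8 + 4 * i ∈ S)
    (tr : ∀ m, 2 ≤ m → m ≤ t + 1 → 5 + m * P ∈ S)
    (f : ∀ i, 0 ≤ i → i < n → L + 12 + 4 * i ∈ S)
    (g0 : L + P + 4 ∈ S) (g1 : L + P + 6 ∈ S)
    (h : ∀ i, 0 ≤ i → i < n → L + P + 11 + 4 * i ∈ S)
    {d : ℤ} (hd0 : 0 ≤ d) (hd : d ≤ L + 5) : d ∈ dca S := by
  have hPpos : 0 < P := by omega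
  obtain ⟨q, r, hdq, hr0, hrP⟩ : ∃ q r : ℤ, d = q * P + r ∧ 0 ≤ r ∧ r < P :=
    ⟨d / P, d % P, (Int.ediv_mul_add_emod d P).symm, Int.emod_nonneg _ hPpos.ne',
      Int.emod_lt_of_pos _ hPpos⟩
  have hq0 : 0 ≤ q := by
    by_contra hq
    nlinarith [show q ≤ -1 by omega]
  have hq1 : q ≤ t + 1 := by
    by_contra hq
    nlinarith [show t + 2 ≤ q by omega]
  have hqr : q = t + 1 → r ≤ 5 := by
    rintro rfl
    linarith
  have hcases : r = 0 ∨ r = 1 ∨ r = 2 ∨ r = 3 ∨ r = 4 ∨ r = 5 ∨ r = P - 1 ∨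
      ∃ i, 0 ≤ i ∧ i < n ∧ (r = 6 + 4 * i ∨ r = 7 + 4 * i ∨ r = 8 + 4 * i ∨ r = 9 + 4 * i) := by
    by_cases h6 : r < 6
    · omega
    by_cases hl : r = P - 1
    · omega
    iterate 7 right
    exact ⟨(r - 6) / 4, by omega, by omega, by omega⟩
  rcases hcases with rfl | rfl | rfl | rfl | rfl | rfl | rfl |
    ⟨i, hi0, hi1, rfl | rfl | rfl | rfl⟩
  · -- `r = 0`
    rcases (by omega : q ≤ t - 1 ∨ q = t ∨ q = t + 1) with hq | rfl | rfl
    · exact sub_mem_dca (tr (q + 2) (by omega) (by omega)) (tr 2 (by omega) (by omega))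
        (by linear_combination hdq)
    · exact sub_mem_dca (f 0 (by omega) (by omega)) (e 1 (by omega) (by omega))
        (by linear_combination hdq - hL)
    · exact sub_mem_dca (f (n - 1) (by omega) (by omega)) c0
        (by linear_combination hdq - hL + hP)
  · -- `r = 1`
    rcases (by omega : q = 0 ∨ (1 ≤ q ∧ q ≤ t) ∨ q = t + 1) with rfl | hq | rfl
    · exact sub_mem_dca c1 c0 (by linear_combination hdq)
    · exact sub_mem_dca g1 (tr (t + 2 - q) (by omega) (by omega))
        (by linear_combination hdq - hL)
    · exact sub_mem_dca (f 0 (by omega) (by omega)) (b 1 (by omega) (by omega))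
        (by linear_combination hdq - hL)
  · -- `r = 2`
    rcases (by omega : q = 0 ∨ q = 1 ∨ 2 ≤ q) with rfl | rfl | hq
    · exact sub_mem_dca g1 g0 (by linear_combination hdq)
    · exact sub_mem_dca c1 a0 (by linear_combination hdq)
    · exact sub_mem_dca (tr q hq hq1) a1 (by linear_combination hdq)
  · -- `r = 3`
    rcases (by omega : q = 0 ∨ (1 ≤ q ∧ q ≤ t) ∨ q = t + 1) with rfl | hq | rfl
    · exact sub_mem_dca a1 a0 (by linear_combination hdq)
    · exact sub_mem_dca (tr (q + 1) (by omega) (by omega)) c1 (by linear_combination hdq)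
    · exact sub_mem_dca g0 c0 (by linear_combination hdq - hL)
  · -- `r = 4`
    rcases (by omega : q = 0 ∨ (1 ≤ q ∧ q ≤ t) ∨ q = t + 1) with rfl | hq | rfl
    · exact sub_mem_dca (b 1 (by omega) (by omega)) (b 0 (by omega) (by omega))
        (by linear_combination hdq)
    · exact sub_mem_dca (tr (q + 1) (by omega) (by omega)) c0 (by linear_combination hdq)
    · exact sub_mem_dca g1 c1 (by linear_combination hdq - hL)
  · -- `r = 5`
    rcases (by omega : q = 0 ∨ q = 1 ∨ 2 ≤ q) with rfl | rfl | hq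
    · exact sub_mem_dca c0 (b (n - 1) (by omega) (by omega)) (by linear_combination hdq - hP)
    · exact sub_mem_dca (e 0 (by omega) (by omega)) a1 (by linear_combination hdq)
    · exact sub_mem_dca (tr q hq hq1) a0 (by linear_combination hdq)
  · -- `r = P - 1`
    rcases (by omega : q ≤ t - 1 ∨ q = t) with hq | rfl
    · exact sub_mem_dca g0 (tr (t + 1 - q) (by omega) (by omega))
        (by linear_combination hdq - hL)
    · exact sub_mem_dca (f (n - 1) (by omega) (by omega)) c1
        (by linear_combination hdq - hL + hP)
  · -- `r = 6 + 4i`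
    rcases (by omega : q = 0 ∨ (1 ≤ q ∧ q ≤ t)) with rfl | hq
    · exact sub_mem_dca c1 (b (n - 1 - i) (by omega) (by omega))
        (by linear_combination hdq - hP)
    · exact sub_mem_dca (h i hi0 hi1) (tr (t + 2 - q) (by omega) (by omega))
        (by linear_combination hdq - hL)
  · -- `r = 7 + 4i`
    rcases (by omega : q ≤ t - 1 ∨ q = t) with hq | rfl
    · exact sub_mem_dca (f i hi0 hi1) (tr (t + 1 - q) (by omega) (by omega))
        (by linear_combination hdq - hL)
    · rcases (by omega : i = 0 ∨ 1 ≤ i) with rfl | hi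
      · exact sub_mem_dca g0 (e (n - 1) (by omega) (by omega))
          (by linear_combination hdq - hL - hP)
      · exact sub_mem_dca (f (i - 1) (by omega) (by omega)) c0
          (by linear_combination hdq - hL)
  · -- `r = 8 + 4i`
    rcases (by omega : q ≤ t - 1 ∨ q = t) with hq | rfl
    · exact sub_mem_dca (tr (q + 2) (by omega) (by omega))
        (e (n - 1 - i) (by omega) (by omega)) (by linear_combination hdq - hP)
    · rcases (by omega : i = n - 1 ∨ i + 1 < n) with rfl | hi
      · exact sub_mem_dca (f 0 (by omega) (by omega)) (b 2 (by omega) (by omega))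
          (by linear_combination hdq - hL - hP)
      · exact sub_mem_dca (f (i + 1) (by omega) (by omega)) (e 0 (by omega) (by omega))
          (by linear_combination hdq - hL)
  · -- `r = 9 + 4i`
    rcases (by omega : q = 0 ∨ (1 ≤ q ∧ q ≤ t)) with rfl | hq
    · rcases (by omega : i = n - 1 ∨ i + 1 < n) with rfl | hi
      · exact sub_mem_dca c0 a1 (by linear_combination hdq - hP)
      · exact sub_mem_dca c0 (b (n - 2 - i) (by omega) (by omega))
          (by linear_combination hdq - hP)
    · exact sub_mem_dca (tr (q + 1) (by omega) (by omega))
        (b (n - 1 - i) (by omega) (by omega)) (by linear_combination hdq - hP)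

/-- The difference coarray of the UF-4BL array contains every integer `d` with
`|d| ≤ J`, where `J = 4·Nb·Nt + 7·Nt + 4·Nb + 12`. -/
theorem uf4bl_central_segment (Nb Nt : ℕ) (hb : 3 ≤ Nb) (ht : 2 ≤ Nt) :
    ∀ d : ℤ, |d| ≤ 4 * (Nb : ℤ) * Nt + 7 * Nt + 4 * Nb + 12 →
      d ∈ dca (UF4BL Nb Nt) := by
  have key : ∀ d : ℤ, 0 ≤ d → d ≤ 4 * (Nb : ℤ) * Nt + 7 * Nt + 4 * Nb + 12 →
      d ∈ dca (UF4BL Nb Nt) := by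
    intro d hd0 hd
    refine central_segment_of_mem (n := Nb) (t := Nt) (P := 4 * Nb + 7)
      (L := (Nt + 1) * (4 * Nb + 7)) (by exact_mod_cast hb) (by exact_mod_cast ht) rfl rfl
      ?_ ?_ ?_ ?_ ?_ ?_ ?_ ?_ ?_ ?_ ?_ hd0 (by linarith)
    all_goals simp only [UF4BL, Finset.mem_union, or_assoc]
    · exact .inl (mem_ULA_s15 0 (by simp) (by simp) (by ring))
    · exact .inl (mem_ULA_s15 1 (by simp) (by simp) (by ring))
    · intro i h0 h1
      exact .inr (.inl (mem_ULA_s15 i h0 h1 (by ring)))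
    · exact .inr (.inr (.inl (mem_ULA_s15 0 (by simp) (by simp) (by ring))))
    · exact .inr (.inr (.inl (mem_ULA_s15 1 (by simp) (by simp) (by ring))))
    · intro i h0 h1
      exact .inr (.inr (.inr (.inl (mem_ULA_s15 i h0 h1 (by ring)))))
    · intro m h0 h1
      exact .inr (.inr (.inr (.inr (.inl
        (mem_ULA_s15 (m - 2) (by omega) (by omega) (by ring))))))
    · intro i h0 h1
      exact .inr (.inr (.inr (.inr (.inr (.inl (mem_ULA_s15 i h0 h1 (by ring)))))))
    · exact .inr (.inr (.inr (.inr (.inr (.inr (.inl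
        (mem_ULA_s15 0 (by simp) (by simp) (by ring))))))))
    · exact .inr (.inr (.inr (.inr (.inr (.inr (.inl
        (mem_ULA_s15 1 (by simp) (by simp) (by ring))))))))
    · intro i h0 h1
      exact .inr (.inr (.inr (.inr (.inr (.inr (.inr (mem_ULA_s15 i h0 h1 (by ring))))))))
  intro d hd
  obtain ⟨h1, h2⟩ := abs_le.1 hd
  rcases le_total 0 d with h0 | h0
  · exact key d h0 h2
  · exact neg_mem_dca (key (-d) (by linarith) (by linarith))
end
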